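/- The augmented Chouhy–Solotar complex ⋯ → P_2 →(∂_2) P_1 →(∂_1) P_0 →(∂_0) A → 0 is exact: ∂_0 is surjective, ker ∂_0 = range ∂_1, and ker ∂_m = range ∂_{m+1} for every m ≥ 1. In other words, (P_•, ∂_•) is a resolution of the diagonal bimodule of the KLRW algebra A. -/

import Mathlib

/-- The dot-count correction `δ(i,j,k)` in the KLRW/Coulomb-branch algebra. -/
def dlt (i j k : ℤ) : ℕ :=
  if 0 ≤ (i - j) * (j - k) then 0 else min (i - j).natAbs (j - k).natAbs

namespace CS

/-- Vertices `{0, …, n}` of the KLRW quiver. -/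
abbrev Vtx (n : ℕ) := Fin (n + 1)

/-- Index of a basis element `a_{j,i}s^α` of the KLRW algebra: `(j, i, α)`
(target, source, number of dots). -/
abbrev B (n : ℕ) := Vtx n × Vtx n × ℕ

/-- The KLRW algebra `A` as a free `k`-module on the symbols `a_{j,i}s^α`. -/
abbrev A (n : ℕ) (k : Type*) [Field k] := B n →₀ k

/-- `δ(i,j,l)` evaluated on vertices. -/
def dd (n : ℕ) (i j l : Vtx n) : ℕ := dlt ((i : ℕ) : ℤ) ((j : ℕ) : ℤ) ((l : ℕ) : ℤ)

/-- The arrows of the KLRW quiver: `p i : i → i+1`, `q i : i+1 → i`, loops `s i : i → i`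
(`p i` stands for the paper's `p_{i+1}`). -/
inductive Arr (n : ℕ) where
  | p (i : Fin n)
  | q (i : Fin n)
  | s (i : Vtx n)

/-- The ambiguities `P^m_{i+1}, Q^m_i, sP^m_{i+1}, sQ^m_i` indexing `S_m` for `m ≥ 2`
(`P i` stands for `P^m_{i+1}`, etc.). -/
inductive Shi (n : ℕ) where
  | P (i : Fin n)
  | Q (i : Fin n)
  | sP (i : Fin n)
  | sQ (i : Fin n)

/-- The index sets `S_m`: vertices for `m = 0`, arrows for `m = 1`, ambiguities for
`m ≥ 2`. -/
abbrev Sym (n : ℕ) (m : ℕ) : Type :=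
  match m with
  | 0 => Vtx n
  | 1 => Arr n
  | _ + 2 => Shi n

/-- Source vertex of an arrow. -/
def arrSrc {n : ℕ} : Arr n → Vtx n
  | .p i => i.castSucc
  | .q i => i.succ
  | .s i => i

/-- Target vertex of an arrow. -/
def arrTgt {n : ℕ} : Arr n → Vtx n
  | .p i => i.succ
  | .q i => i.castSucc
  | .s i => i

/-- Target vertex of an ambiguity (independent of its degree). -/
def shiTgt {n : ℕ} : Shi n → Vtx n
  | .P i => i.succ
  | .Q i => i.castSucc
  | .sP i => i.succ
  | .sQ i => i.castSucc

/-- Source vertex of an ambiguity of even degree. -/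
def shiSrcE {n : ℕ} : Shi n → Vtx n
  | .P i => i.succ
  | .Q i => i.castSucc
  | .sP i => i.castSucc
  | .sQ i => i.succ

/-- Source vertex of an ambiguity of odd degree. -/
def shiSrcO {n : ℕ} : Shi n → Vtx n
  | .P i => i.castSucc
  | .Q i => i.succ
  | .sP i => i.succ
  | .sQ i => i.castSucc

/-- Target vertex of an element of `S_m`. -/
def symTgt (n : ℕ) : (m : ℕ) → Sym n m → Vtx n
  | 0, v => v
  | 1, γ => arrTgt γ
  | _ + 2, w => shiTgt w

/-- Source vertex of an element of `S_m`. -/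
def symSrc (n : ℕ) : (m : ℕ) → Sym n m → Vtx n
  | 0, v => v
  | 1, γ => arrSrc γ
  | m + 2, w => if Even (m + 2) then shiSrcE w else shiSrcO w

/-- Generators of the projective bimodule `P_m`: triples `a ⊗ w ⊗ b` with `w ∈ S_m` and
basis elements `a, b` of `A` such that `source(a) = tgt(w)` and `target(b) = src(w)`. -/
abbrev Gen (n m : ℕ) :=
  {g : B n × Sym n m × B n // g.1.2.1 = symTgt n m g.2.1 ∧ (g.2.2).1 = symSrc n m g.2.1}

/-- The projective `(A,A)`-bimodule `P_m = A ⊗ kS_m ⊗ A`: the free `k`-module on the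
compatible triples. -/
abbrev P (n : ℕ) (k : Type*) [Field k] (m : ℕ) := Gen n m →₀ k

variable (n : ℕ) (k : Type*) [Field k]

/-- The generator `a ⊗ w ⊗ b`, interpreted as `0` if the triple is not compatible
(all triples appearing in the differentials below are compatible). -/
noncomputable def genSingle (m : ℕ) (a : B n) (w : Sym n m) (b : B n) : P n k m :=
  if h : a.2.1 = symTgt n m w ∧ b.1 = symSrc n m w then
    Finsupp.single ⟨(a, w, b), h⟩ 1
  else 0

/-- Left action of `A` on `P_m`: `x·(a⊗w⊗b) = (x·a)⊗w⊗b`, expanding products in `A`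
and discarding zero terms. -/
noncomputable def actL (m : ℕ) (x : A n k) (v : P n k m) : P n k m :=
  x.sum fun xb c => v.sum fun g d =>
    (c * d) •
      (if xb.2.1 = g.1.1.1 then
        genSingle n k m
          (xb.1, g.1.1.2.1, xb.2.2 + g.1.1.2.2 + dd n g.1.1.2.1 g.1.1.1 xb.1)
          g.1.2.1 g.1.2.2
      else 0)

/-- Right action of `A` on `P_m`: `(a⊗w⊗b)·y = a⊗w⊗(b·y)`, expanding products in `A`
and discarding zero terms. -/
noncomputable def actR (m : ℕ) (v : P n k m) (y : A n k) : P n k m :=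
  v.sum fun g d => y.sum fun yb c =>
    (d * c) •
      (if g.1.2.2.2.1 = yb.1 then
        genSingle n k m g.1.1 g.1.2.1
          (g.1.2.2.1, yb.2.1, g.1.2.2.2.2 + yb.2.2 + dd n yb.2.1 yb.1 g.1.2.2.1)
      else 0)

/-- The augmentation `∂_0 : P_0 → A`, `a ⊗ e_i ⊗ b ↦ a·b`. -/
noncomputable def bnd0 (v : P n k 0) : A n k :=
  v.sum fun g c =>
    if g.1.1.2.1 = g.1.2.2.1 then
      Finsupp.single
        (g.1.1.1, g.1.2.2.2.1,
          g.1.1.2.2 + g.1.2.2.2.2 + dd n g.1.2.2.2.1 g.1.2.2.1 g.1.1.1) c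
    else 0

/-- The idempotent basis element `e_v = a_{v,v}s^0`. -/
def eB {n : ℕ} (v : Vtx n) : B n := (v, v, 0)

/-- The basis element `p_{i+1} = a_{i+1,i}s^0`. -/
def pB {n : ℕ} (i : Fin n) : B n := (i.succ, i.castSucc, 0)

/-- The basis element `q_i = a_{i,i+1}s^0`. -/
def qB {n : ℕ} (i : Fin n) : B n := (i.castSucc, i.succ, 0)

/-- The basis element `s_v = a_{v,v}s^1` (in the differential formulas `s_i` denotes
`a_{i,i}s^1`). -/
def sB {n : ℕ} (v : Vtx n) : B n := (v, v, 1)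

/-- The basis element of `A` corresponding to an arrow (`s i ↦ a_{i,i}s^1`). -/
def arrB {n : ℕ} : Arr n → B n
  | .p i => pB i
  | .q i => qB i
  | .s i => sB i

/-- `P^m_{i+1}` as an element of `S_m`, for `m ≥ 1` (with `P¹_{i+1} := p_{i+1}`). -/
def lowP (n : ℕ) : (m : ℕ) → Fin n → Sym n (m + 1)
  | 0, i => Arr.p i
  | _ + 1, i => Shi.P i

/-- `Q^m_i` as an element of `S_m`, for `m ≥ 1` (with `Q¹_i := q_i`). -/
def lowQ (n : ℕ) : (m : ℕ) → Fin n → Sym n (m + 1)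
  | 0, i => Arr.q i
  | _ + 1, i => Shi.Q i

/-- `sP^m_{i+1}` as an element of `S_m`, for `m ≥ 1` (with `sP¹_{i+1} := s_{i+1}`). -/
def lowSP (n : ℕ) : (m : ℕ) → Fin n → Sym n (m + 1)
  | 0, i => Arr.s i.succ
  | _ + 1, i => Shi.sP i

/-- `sQ^m_i` as an element of `S_m`, for `m ≥ 1` (with `sQ¹_i := s_i`). -/
def lowSQ (n : ℕ) : (m : ℕ) → Fin n → Sym n (m + 1)
  | 0, i => Arr.s i.castSucc
  | _ + 1, i => Shi.sQ i

/-- The idempotent at the target of `w` (the left "1" in the differential formulas). -/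
def oneL (m : ℕ) (w : Sym n m) : B n := eB (symTgt n m w)

/-- The idempotent at the source of `w` (the right "1" in the differential formulas). -/
def oneR (m : ℕ) (w : Sym n m) : B n := eB (symSrc n m w)

/-- Value of the differential `∂_{m+1}` on the generator `1 ⊗ w ⊗ 1`, `w ∈ S_{m+1}`. -/
noncomputable def dGen : (m : ℕ) → Sym n (m + 1) → P n k m
  | 0, γ =>
      genSingle n k 0 (eB (arrTgt γ)) (arrTgt γ) (arrB γ)
        - genSingle n k 0 (arrB γ) (arrSrc γ) (eB (arrSrc γ))
  | m + 1, w =>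
      if Even (m + 2) then
        -- the formulas for `∂_m` with `m ≥ 2` even
        match w with
        | Shi.Q i =>
            genSingle n k (m + 1) (oneL n (m + 1) (lowQ n m i)) (lowQ n m i) (pB i)
              + genSingle n k (m + 1) (qB i) (lowP n m i) (oneR n (m + 1) (lowP n m i))
              - genSingle n k (m + 1) (oneL n (m + 1) (lowSQ n m i)) (lowSQ n m i)
                  (oneR n (m + 1) (lowSQ n m i))
        | Shi.P i =>
            genSingle n k (m + 1) (oneL n (m + 1) (lowP n m i)) (lowP n m i) (qB i)
              + genSingle n k (m + 1) (pB i) (lowQ n m i) (oneR n (m + 1) (lowQ n m i))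
              - genSingle n k (m + 1) (oneL n (m + 1) (lowSP n m i)) (lowSP n m i)
                  (oneR n (m + 1) (lowSP n m i))
        | Shi.sP i =>
            genSingle n k (m + 1) (oneL n (m + 1) (lowSP n m i)) (lowSP n m i) (pB i)
              + genSingle n k (m + 1) (sB i.succ) (lowP n m i) (oneR n (m + 1) (lowP n m i))
              - genSingle n k (m + 1) (pB i) (lowSQ n m i) (oneR n (m + 1) (lowSQ n m i))
              - genSingle n k (m + 1) (oneL n (m + 1) (lowP n m i)) (lowP n m i) (sB i.castSucc)
        | Shi.sQ i =>
            genSingle n k (m + 1) (oneL n (m + 1) (lowSQ n m i)) (lowSQ n m i) (qB i)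
              + genSingle n k (m + 1) (sB i.castSucc) (lowQ n m i) (oneR n (m + 1) (lowQ n m i))
              - genSingle n k (m + 1) (qB i) (lowSP n m i) (oneR n (m + 1) (lowSP n m i))
              - genSingle n k (m + 1) (oneL n (m + 1) (lowQ n m i)) (lowQ n m i) (sB i.succ)
      else
        -- the formulas for `∂_m` with `m ≥ 3` odd
        match w with
        | Shi.Q i =>
            genSingle n k (m + 1) (oneL n (m + 1) (lowQ n m i)) (lowQ n m i) (qB i)
              - genSingle n k (m + 1) (qB i) (lowP n m i) (oneR n (m + 1) (lowP n m i))
              + genSingle n k (m + 1) (oneL n (m + 1) (lowSQ n m i)) (lowSQ n m i)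
                  (oneR n (m + 1) (lowSQ n m i))
        | Shi.P i =>
            genSingle n k (m + 1) (oneL n (m + 1) (lowP n m i)) (lowP n m i) (pB i)
              - genSingle n k (m + 1) (pB i) (lowQ n m i) (oneR n (m + 1) (lowQ n m i))
              + genSingle n k (m + 1) (oneL n (m + 1) (lowSP n m i)) (lowSP n m i)
                  (oneR n (m + 1) (lowSP n m i))
        | Shi.sP i =>
            genSingle n k (m + 1) (oneL n (m + 1) (lowSP n m i)) (lowSP n m i) (qB i)
              - genSingle n k (m + 1) (sB i.succ) (lowP n m i) (oneR n (m + 1) (lowP n m i))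
              + genSingle n k (m + 1) (pB i) (lowSQ n m i) (oneR n (m + 1) (lowSQ n m i))
              + genSingle n k (m + 1) (oneL n (m + 1) (lowP n m i)) (lowP n m i) (sB i.succ)
        | Shi.sQ i =>
            genSingle n k (m + 1) (oneL n (m + 1) (lowSQ n m i)) (lowSQ n m i) (pB i)
              - genSingle n k (m + 1) (sB i.castSucc) (lowQ n m i) (oneR n (m + 1) (lowQ n m i))
              + genSingle n k (m + 1) (qB i) (lowSP n m i) (oneR n (m + 1) (lowSP n m i))
              + genSingle n k (m + 1) (oneL n (m + 1) (lowQ n m i)) (lowQ n m i) (sB i.castSucc)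

/-- The differential `∂_{m+1} : P_{m+1} → P_m` of the Chouhy–Solotar complex of the KLRW
algebra, extended from the generators by `A`-bimodule linearity:
`∂(a ⊗ w ⊗ b) = a · ∂(1 ⊗ w ⊗ 1) · b`. -/
noncomputable def bnd (m : ℕ) (v : P n k (m + 1)) : P n k m :=
  v.sum fun g c =>
    c • actL n k m (Finsupp.single g.1.1 1)
          (actR n k m (dGen n k m g.1.2.1) (Finsupp.single g.1.2.2 1))

end CS

/-!
For fixed outer ends `j` and `l`, write `x` and `y` for a dot on the left and on the right, so that
`a_{j,·}s^α ⊗ w ⊗ a_{·,l}s^β` becomes `x ^ α * y ^ β * w`. Passing from a dotted symbol to its edge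
symbol multiplies by `± (x - y)`, and an arrow acting from the outside multiplies by `1` or by one
variable, according to whether it leads towards or away from that end; along each edge of the quiver
the complex is that of a two-periodic matrix factorization. It is contracted `k`-linearly by
dividing by `x - y`. The remainder `y ^ (α + β)` is dealt with as follows. In positive degrees, one
of the two arrows on each edge leads towards `j` and hence acts by `1` on the left. In degree `0`,
the vertex `v` is joined to `j` by the straight walk, all of whose arrows act by `1` on the left, so
that the remainder is moved to `e_j ⊗ e_j ⊗ a_{j,l}s^γ`, the canonical lift of `a_{j,l}s^γ`.
-/

namespace CS

theorem exact_of_homotopy {R M N K : Type*} [Semiring R] [AddCommMonoid M] [AddCommMonoid N]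
    [AddCommMonoid K] [Module R M] [Module R N] [Module R K] {f : M →ₗ[R] N} {g : N →ₗ[R] K}
    (h₀ : K →ₗ[R] N) (h₁ : N →ₗ[R] M) (hgf : g ∘ₗ f = 0)
    (hh : f ∘ₗ h₁ + h₀ ∘ₗ g = LinearMap.id) : Function.Exact f g := fun y ↦ by
  refine ⟨fun hy ↦ ⟨h₁ y, ?_⟩, ?_⟩
  · simpa [hy] using LinearMap.congr_fun hh y
  · rintro ⟨x, rfl⟩
    exact LinearMap.congr_fun hgf x

section DivDiff

variable {M N : Type*} [AddCommMonoid M] [AddCommMonoid N]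

/-- The divided difference `∑ i < α, F i (α + β - 1 - i)`. If `F a b` stands for `x ^ a * y ^ b`,
this is the quotient of `x ^ α * y ^ β - y ^ (α + β)` by `x - y`. The subtraction never truncates,
as `i < α`. -/
def divDiff (F : ℕ → ℕ → M) (α β : ℕ) : M :=
  ∑ i ∈ Finset.range α, F i (α + β - 1 - i)

theorem map_divDiff {φ : Type*} [FunLike φ M N] [AddMonoidHomClass φ M N] (f : φ) (F : ℕ → ℕ → M)
    (α β : ℕ) : f (divDiff F α β) = divDiff (fun a b ↦ f (F a b)) α β :=
  map_sum f _ _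

theorem divDiff_add (F G : ℕ → ℕ → M) (α β : ℕ) :
    divDiff (fun a b ↦ F a b + G a b) α β = divDiff F α β + divDiff G α β :=
  Finset.sum_add_distrib

theorem divDiff_smul {R : Type*} [DistribSMul R M] (c : R) (F : ℕ → ℕ → M) (α β : ℕ) :
    divDiff (fun a b ↦ c • F a b) α β = c • divDiff F α β :=
  Finset.smul_sum.symm

theorem divDiff_shift_right (F : ℕ → ℕ → M) (α β c : ℕ) :
    divDiff (fun a b ↦ F a (b + c)) α β = divDiff F α (β + c) :=
  Finset.sum_congr rfl fun i hi ↦ by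
    have := Finset.mem_range.1 hi
    dsimp only
    congr 1
    omega

theorem divDiff_succ_left (F : ℕ → ℕ → M) (α β : ℕ) :
    divDiff F (α + 1) β = divDiff F α (β + 1) + F α β := by
  rw [divDiff, Finset.sum_range_succ, divDiff]
  congr 2
  · funext i
    congr 1
    omega
  · omega

variable {G : Type*} [AddCommGroup G]

theorem divDiff_sub (F F' : ℕ → ℕ → G) (α β : ℕ) :
    divDiff (fun a b ↦ F a b - F' a b) α β = divDiff F α β - divDiff F' α β :=
  Finset.sum_sub_distrib ..

theorem divDiff_shift_left (F : ℕ → ℕ → G) (α β : ℕ) :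
    divDiff (fun a b ↦ F (a + 1) b) α β = divDiff F (α + 1) β - F 0 (α + β) := by
  rw [eq_sub_iff_add_eq]
  simp [divDiff, Finset.sum_range_succ', Nat.sub_sub, add_comm, add_left_comm]

theorem divDiff_telescope (F : ℕ → ℕ → G) (α β : ℕ) :
    divDiff (fun a b ↦ F (a + 1) b - F a (b + 1)) α β = F α β - F 0 (α + β) := by
  rw [divDiff_sub, divDiff_shift_left, divDiff_shift_right, divDiff_succ_left]
  abel

end DivDiff

/-- The two directions in which an edge `{t, t + 1}` of the quiver can be walked. The families
`P^m, sP^m` belong to `up` and `Q^m, sQ^m` to `down`; exchanging the directions is the symmetry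
between the two halves of the formulas for `∂_m`. -/
inductive Dir where
  | up
  | down

namespace Dir

variable {n : ℕ} (X : Dir) (j : Vtx n) (t : Fin n)

/-- The opposite direction. -/
def op : Dir → Dir
  | up => down
  | down => up

@[simp] theorem op_op : X.op.op = X := by cases X <;> rfl

theorem op_iterate_op (m : ℕ) : op^[m] X.op = (op^[m] X).op :=
  Function.iterate_succ_apply' ..

theorem op_involutive : Function.Involutive op := op_op

theorem op_iterate_eq_ite (m : ℕ) : op^[m] X = if Even m then X else X.op := by
  split_ifs with h
  · rw [op_involutive.iterate_even h, id]
  · rw [op_involutive.iterate_odd (Nat.not_even_iff_odd.1 h)]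

/-- The target of the arrow on the edge `{t, t + 1}` with direction `X`. Its source is
`X.op.head t`. -/
def head : Dir → Fin n → Vtx n
  | up, t => t.succ
  | down, t => t.castSucc

/-- The number (`0` or `1`) of dots created when the arrow on the edge `{t, t + 1}` with direction
`X` is multiplied on the left by an element with target `j`: it is `1` if this arrow leads away
from `j`. -/
def backtrack : Dir → Vtx n → Fin n → ℕ
  | up, j, t => if (j : ℕ) ≤ t then 1 else 0
  | down, j, t => if (j : ℕ) ≤ t then 0 else 1

theorem backtrack_add_op : X.backtrack j t + X.op.backtrack j t = 1 := by
  cases X <;> simp only [backtrack, op] <;> split_ifs <;> rfl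

theorem backtrack_op_add : X.op.backtrack j t + X.backtrack j t = 1 := by
  rw [add_comm, backtrack_add_op]

theorem backtrack_eq_zero_or :
    X.backtrack j t = 0 ∧ X.op.backtrack j t = 1 ∨
      X.backtrack j t = 1 ∧ X.op.backtrack j t = 0 := by
  have := X.backtrack_add_op j t
  omega

/-- The symbol `P^{m+1}_{t+1}` for the direction `up` and `Q^{m+1}_t` for `down`. -/
def edge (m : ℕ) : Dir → Fin n → Sym n (m + 1)
  | up, t => lowP n m t
  | down, t => lowQ n m t

/-- The symbol `sP^{m+1}_{t+1}` for the direction `up` and `sQ^{m+1}_t` for `down`. -/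
def dotted (m : ℕ) : Dir → Fin n → Sym n (m + 1)
  | up, t => lowSP n m t
  | down, t => lowSQ n m t

end Dir

section Endpoints

variable {n : ℕ} (m : ℕ) (t : Fin n)

@[simp] theorem symTgt_lowP : symTgt n (m + 1) (lowP n m t) = t.succ := by cases m <;> rfl

@[simp] theorem symTgt_lowQ : symTgt n (m + 1) (lowQ n m t) = t.castSucc := by cases m <;> rfl

@[simp] theorem symTgt_lowSP : symTgt n (m + 1) (lowSP n m t) = t.succ := by cases m <;> rfl

@[simp] theorem symTgt_lowSQ : symTgt n (m + 1) (lowSQ n m t) = t.castSucc := by cases m <;> rfl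

@[simp] theorem symSrc_lowP :
    symSrc n (m + 1) (lowP n m t) = if Even m then t.castSucc else t.succ := by
  cases m <;> simp [symSrc, lowP, arrSrc, shiSrcE, shiSrcO, parity_simps, -Nat.not_even_iff_odd]

@[simp] theorem symSrc_lowQ :
    symSrc n (m + 1) (lowQ n m t) = if Even m then t.succ else t.castSucc := by
  cases m <;> simp [symSrc, lowQ, arrSrc, shiSrcE, shiSrcO, parity_simps, -Nat.not_even_iff_odd]

@[simp] theorem symSrc_lowSP :
    symSrc n (m + 1) (lowSP n m t) = if Even m then t.succ else t.castSucc := by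
  cases m <;> simp [symSrc, lowSP, arrSrc, shiSrcE, shiSrcO, parity_simps, -Nat.not_even_iff_odd]

@[simp] theorem symSrc_lowSQ :
    symSrc n (m + 1) (lowSQ n m t) = if Even m then t.castSucc else t.succ := by
  cases m <;> simp [symSrc, lowSQ, arrSrc, shiSrcE, shiSrcO, parity_simps, -Nat.not_even_iff_odd]

end Endpoints

namespace Dir

variable {n : ℕ} (X : Dir) (m : ℕ) (t : Fin n)

theorem symTgt_edge : symTgt n (m + 1) (X.edge m t) = X.head t := by
  cases X <;> simp [edge, head]

theorem symTgt_dotted : symTgt n (m + 1) (X.dotted m t) = X.head t := by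
  cases X <;> simp [dotted, head]

theorem symSrc_edge : symSrc n (m + 1) (X.edge m t) = (op^[m] X).op.head t := by
  cases X <;> by_cases hm : Even m <;> simp [op_iterate_eq_ite, edge, head, op, hm]

theorem symSrc_dotted : symSrc n (m + 1) (X.dotted m t) = (op^[m] X).head t := by
  cases X <;> by_cases hm : Even m <;> simp [op_iterate_eq_ite, dotted, head, op, hm]

end Dir

theorem dd_self_left {n : ℕ} (i l : Vtx n) : dd n i i l = 0 := by simp [dd, dlt]

theorem dd_self_right {n : ℕ} (i l : Vtx n) : dd n i l l = 0 := by simp [dd, dlt]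

/-- The sign condition defining `dlt`, written linearly so that `omega` can decide it. -/
theorem dlt_eq_ite_between (i j l : ℤ) :
    dlt i j l = if (i ≤ j ∧ j ≤ l) ∨ (l ≤ j ∧ j ≤ i) then 0
      else min (i - j).natAbs (j - l).natAbs := by
  rw [dlt]
  congr 1
  rw [mul_nonneg_iff, eq_iff_iff]
  omega

theorem dd_comm {n : ℕ} (i j l : Vtx n) : dd n i j l = dd n l j i := by
  simp only [dd, dlt_eq_ite_between]
  split_ifs <;> omega

namespace Dir

variable {n : ℕ} (X : Dir) (j l : Vtx n) (t : Fin n)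

theorem dd_tail_head : dd n (X.op.head t) (X.head t) j = X.backtrack j t := by
  cases X <;>
    simp only [dd, dlt_eq_ite_between, head, op, backtrack, Fin.val_castSucc, Fin.val_succ] <;>
    split_ifs <;> omega

theorem dd_head_tail : dd n (X.head t) (X.op.head t) j = X.op.backtrack j t := by
  simpa using X.op.dd_tail_head j t

theorem backtrack_op_add_dd_head :
    X.op.backtrack l t + dd n l (X.head t) j = X.backtrack j t + dd n l (X.op.head t) j := by
  cases X <;>
    simp only [dd, dlt_eq_ite_between, head, op, backtrack, Fin.val_castSucc, Fin.val_succ] <;>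
    split_ifs <;> omega

end Dir

section Tensor

variable {n : ℕ} {k : Type*} [Field k] {m : ℕ}

variable (k m) in
/-- The basis element `a_{j,tgt w}s^α ⊗ w ⊗ a_{src w,l}s^β` of `P_m`. -/
noncomputable def tensor (w : Sym n m) (j l : Vtx n) (α β : ℕ) : P n k m :=
  Finsupp.single ⟨((j, symTgt n m w, α), w, (symSrc n m w, l, β)), rfl, rfl⟩ 1

theorem single_eq_tensor (g : Gen n m) :
    (Finsupp.single g 1 : P n k m) =
      tensor k m g.1.2.1 g.1.1.1 g.1.2.2.2.1 g.1.1.2.2 g.1.2.2.2.2 := by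
  obtain ⟨⟨⟨j, u, α⟩, w, ⟨u', l, β⟩⟩, hu, hu'⟩ := g
  obtain rfl : u = symTgt n m w := hu
  obtain rfl : u' = symSrc n m w := hu'
  rfl

theorem genSingle_eq_tensor {a b : B n} {w : Sym n m} (ha : a.2.1 = symTgt n m w)
    (hb : b.1 = symSrc n m w) :
    genSingle n k m a w b = tensor k m w a.1 b.2.1 a.2.2 b.2.2 :=
  (dif_pos ⟨ha, hb⟩).trans (single_eq_tensor _)

variable {M : Type*} [AddCommMonoid M] [Module k M]

theorem hom_ext {f g : P n k m →ₗ[k] M}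
    (h : ∀ w j l α β, f (tensor k m w j l α β) = g (tensor k m w j l α β)) : f = g :=
  Finsupp.lhom_ext' fun x ↦ LinearMap.ext_ring <| by
    simpa only [LinearMap.comp_apply, Finsupp.lsingle_apply, single_eq_tensor] using h _ _ _ _ _

/-- The `k`-linear map out of `P_m` with prescribed values `φ w j l α β` on the basis. -/
noncomputable def tensorLift (φ : Sym n m → Vtx n → Vtx n → ℕ → ℕ → M) : P n k m →ₗ[k] M :=
  Finsupp.linearCombination k fun g ↦ φ g.1.2.1 g.1.1.1 g.1.2.2.2.1 g.1.1.2.2 g.1.2.2.2.2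

@[simp] theorem tensorLift_tensor (φ : Sym n m → Vtx n → Vtx n → ℕ → ℕ → M) (w : Sym n m)
    (j l : Vtx n) (α β : ℕ) : tensorLift φ (tensor k m w j l α β) = φ w j l α β := by
  simp [tensorLift, tensor]

theorem actL_single_tensor (i j l : Vtx n) (w : Sym n m) (α β γ : ℕ) :
    actL n k m (.single (i, j, γ) 1) (tensor k m w j l α β) =
      tensor k m w i l (γ + α + dd n (symTgt n m w) j i) β := by
  simp [actL, tensor, genSingle, -Finsupp.single_mul]

theorem actR_tensor_single (i j l : Vtx n) (w : Sym n m) (α β γ : ℕ) :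
    actR n k m (tensor k m w j l α β) (.single (l, i, γ) 1) =
      tensor k m w j i α (β + γ + dd n i l (symSrc n m w)) := by
  simp [actR, tensor, genSingle, -Finsupp.single_mul]

variable (k m) in
/-- The operator `v ↦ a · v · b` on `P_m`, for basis elements `a` and `b` of `A`. -/
noncomputable def sandwich (a b : B n) : P n k m →ₗ[k] P n k m :=
  (Finsupp.linearCombination k fun g : Gen n m ↦ actL n k m (.single a 1) (.single g 1)) ∘ₗ
    Finsupp.linearCombination k fun g : Gen n m ↦ actR n k m (.single g 1) (.single b 1)

theorem sandwich_apply (a b : B n) (v : P n k m) :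
    sandwich k m a b v = actL n k m (.single a 1) (actR n k m v (.single b 1)) := by
  simp [sandwich, actL, actR, Finsupp.linearCombination_apply]

theorem sandwich_tensor (i j l i' : Vtx n) (w : Sym n m) (α β γ δ : ℕ) :
    sandwich k m (i, j, γ) (l, i', δ) (tensor k m w j l α β) =
      tensor k m w i i' (γ + α + dd n (symTgt n m w) j i)
        (β + δ + dd n i' l (symSrc n m w)) := by
  rw [sandwich_apply, actR_tensor_single, actL_single_tensor]

variable (n k) in
/-- The differential `∂_{m+1}` as a `k`-linear map. -/
noncomputable def differential (m : ℕ) : P n k (m + 1) →ₗ[k] P n k m :=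
  tensorLift fun w j l α β ↦
    sandwich k m (j, symTgt n (m + 1) w, α) (symSrc n (m + 1) w, l, β) (dGen n k m w)

theorem coe_differential (m : ℕ) : ⇑(differential n k m) = bnd n k m := by
  funext v
  rw [bnd, differential, tensorLift, Finsupp.linearCombination_apply]
  refine Finsupp.sum_congr fun g _ ↦ ?_
  rw [sandwich_apply, ← g.2.1, ← g.2.2]

variable (n k) in
/-- The augmentation `∂_0` as a `k`-linear map. -/
noncomputable def augmentation : P n k 0 →ₗ[k] A n k :=
  tensorLift fun v j l α β ↦ .single (j, l, α + β + dd n l v j) 1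

theorem coe_augmentation : ⇑(augmentation n k) = bnd0 n k := by
  funext v
  rw [bnd0, augmentation, tensorLift, Finsupp.linearCombination_apply]
  refine Finsupp.sum_congr fun g _ ↦ ?_
  obtain ⟨⟨⟨j, u, α⟩, w, ⟨u', l, β⟩⟩, hu, hu'⟩ := g
  obtain rfl : u = w := hu
  obtain rfl : u' = u := hu'
  simp

end Tensor

section Differential

variable {n : ℕ} {k : Type*} [Field k]

variable (k) in
/-- The basis element `a_{j,·}s^α ⊗ w ⊗ a_{·,l}s^β` of `P_{m+1}`, where `w` is `P^{m+1}_{t+1}` if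
`X` is `up` and `Q^{m+1}_t` if `X` is `down`. The arguments are `m X t j l α β`. -/
noncomputable def edgeElt (m : ℕ) (X : Dir) (t : Fin n) :
    Vtx n → Vtx n → ℕ → ℕ → P n k (m + 1) :=
  tensor k (m + 1) (X.edge m t)

variable (k) in
/-- The basis element `a_{j,·}s^α ⊗ w ⊗ a_{·,l}s^β` of `P_{m+1}`, where `w` is `sP^{m+1}_{t+1}` if
`X` is `up` and `sQ^{m+1}_t` if `X` is `down`. The arguments are `m X t j l α β`. -/
noncomputable def dotElt (m : ℕ) (X : Dir) (t : Fin n) :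
    Vtx n → Vtx n → ℕ → ℕ → P n k (m + 1) :=
  tensor k (m + 1) (X.dotted m t)

theorem dGen_edge (m : ℕ) (X : Dir) (t : Fin n) :
    dGen n k (m + 1) (X.edge (m + 1) t) =
      edgeElt k m X t (X.head t) ((Dir.op^[m] X).head t) 0 0 +
        (-1 : ℤ) ^ m • (edgeElt k m X.op t (X.head t) ((Dir.op^[m] X).head t) 0 0 -
          dotElt k m X t (X.head t) ((Dir.op^[m] X).head t) 0 0) := by
  rw [Dir.op_iterate_eq_ite, neg_one_pow_eq_ite]
  cases X <;> change (if Even (m + 2) then _ else _) = _ <;> by_cases hm : Even m <;>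
    simp only [genSingle_eq_tensor, edgeElt, dotElt, Dir.edge, Dir.dotted, Dir.head, Dir.op, oneL,
      oneR, eB, pB, qB, symTgt_lowP, symTgt_lowQ, symTgt_lowSP, symTgt_lowSQ, symSrc_lowP,
      symSrc_lowQ, symSrc_lowSP, symSrc_lowSQ, hm, Nat.even_add, even_two, iff_true, if_true,
      if_false] <;>
    abel

theorem dGen_dotted (m : ℕ) (X : Dir) (t : Fin n) :
    dGen n k (m + 1) (X.dotted (m + 1) t) =
      dotElt k m X t (X.head t) ((Dir.op^[m] X).op.head t) 0 0 +
        (-1 : ℤ) ^ m • (edgeElt k m X t (X.head t) ((Dir.op^[m] X).op.head t) 1 0 -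
          edgeElt k m X t (X.head t) ((Dir.op^[m] X).op.head t) 0 1 -
          dotElt k m X.op t (X.head t) ((Dir.op^[m] X).op.head t) 0 0) := by
  rw [Dir.op_iterate_eq_ite, neg_one_pow_eq_ite]
  cases X <;> change (if Even (m + 2) then _ else _) = _ <;> by_cases hm : Even m <;>
    simp only [genSingle_eq_tensor, edgeElt, dotElt, Dir.edge, Dir.dotted, Dir.head, Dir.op, oneL,
      oneR, eB, pB, qB, sB, symTgt_lowP, symTgt_lowQ, symTgt_lowSP, symTgt_lowSQ, symSrc_lowP,
      symSrc_lowQ, symSrc_lowSP, symSrc_lowSQ, hm, Nat.even_add, even_two, iff_true, if_true,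
      if_false] <;>
    abel

variable (k) in
/-- The basis element `a_{j,v}s^α ⊗ e_v ⊗ a_{v,l}s^β` of `P_0`, with arguments `v j l α β`. -/
noncomputable def vertexElt (v : Vtx n) : Vtx n → Vtx n → ℕ → ℕ → P n k 0 :=
  tensor k 0 v

variable (k) in
/-- The basis element `a_{j,v}s^α ⊗ s_v ⊗ a_{v,l}s^β` of `P_1`, with arguments `v j l α β`. The
degree is written `0 + 1` to match the types of `edgeElt k 0` and `differential n k 0`
syntactically. -/
noncomputable def loopElt (v : Vtx n) : Vtx n → Vtx n → ℕ → ℕ → P n k (0 + 1) :=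
  tensor k (0 + 1) (Arr.s v)

theorem dotElt_zero (X : Dir) (t : Fin n) : dotElt k 0 X t = loopElt k (X.head t) := by
  cases X <;> rfl

section

variable {M : Type*} [AddCommMonoid M] [Module k M]

theorem hom_ext_zero {f g : P n k 0 →ₗ[k] M}
    (hv : ∀ v j l α β, f (vertexElt k v j l α β) = g (vertexElt k v j l α β)) : f = g :=
  hom_ext hv

theorem hom_ext_one {f g : P n k (0 + 1) →ₗ[k] M}
    (he : ∀ X t j l α β, f (edgeElt k 0 X t j l α β) = g (edgeElt k 0 X t j l α β))
    (hs : ∀ v j l α β, f (loopElt k v j l α β) = g (loopElt k v j l α β)) : f = g :=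
  hom_ext fun w ↦ match w with
    | .p t => he .up t
    | .q t => he .down t
    | .s v => hs v

theorem hom_ext_add_two {m : ℕ} {f g : P n k (m + 1 + 1) →ₗ[k] M}
    (he : ∀ X t j l α β, f (edgeElt k (m + 1) X t j l α β) = g (edgeElt k (m + 1) X t j l α β))
    (hd : ∀ X t j l α β, f (dotElt k (m + 1) X t j l α β) = g (dotElt k (m + 1) X t j l α β)) :
    f = g :=
  hom_ext fun w ↦ match w with
    | .P t => he .up t
    | .Q t => he .down t
    | .sP t => hd .up t
    | .sQ t => hd .down t

end

section

variable (m : ℕ) (X : Dir) (t : Fin n) (v j l : Vtx n) (α β : ℕ)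

theorem augmentation_vertexElt :
    augmentation n k (vertexElt k v j l α β) = .single (j, l, α + β + dd n l v j) 1 :=
  tensorLift_tensor ..

theorem dGen_loop : dGen n k 0 (Arr.s v) = vertexElt k v v v 0 1 - vertexElt k v v v 1 0 :=
  congr_arg₂ (· - ·) (genSingle_eq_tensor rfl rfl) (genSingle_eq_tensor rfl rfl)

theorem dGen_zero_edge :
    dGen n k 0 (X.edge 0 t) = vertexElt k (X.head t) (X.head t) (X.op.head t) 0 0 -
      vertexElt k (X.op.head t) (X.head t) (X.op.head t) 0 0 := by
  cases X <;>
    exact congr_arg₂ (· - ·) (genSingle_eq_tensor rfl rfl) (genSingle_eq_tensor rfl rfl)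

theorem sandwich_vertexElt (i i' : Vtx n) (γ δ : ℕ) :
    sandwich k 0 (i, j, γ) (l, i', δ) (vertexElt k v j l α β) =
      vertexElt k v i i' (γ + α + dd n v j i) (β + δ + dd n i' l v) :=
  sandwich_tensor ..

theorem differential_loopElt :
    differential n k 0 (loopElt k v j l α β) =
      vertexElt k v j l α (β + 1) - vertexElt k v j l (α + 1) β := by
  rw [loopElt, differential, tensorLift_tensor, dGen_loop, map_sub]
  change sandwich k 0 (j, v, α) (v, l, β) _ - sandwich k 0 (j, v, α) (v, l, β) _ = _
  rw [sandwich_vertexElt, sandwich_vertexElt]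
  simp [dd_self_left, dd_self_right, add_comm 1]

theorem differential_zero_edgeElt :
    differential n k 0 (edgeElt k 0 X t j l α β) =
      vertexElt k (X.head t) j l α (β + X.op.backtrack l t) -
        vertexElt k (X.op.head t) j l (α + X.backtrack j t) β := by
  rw [edgeElt, differential, tensorLift_tensor, dGen_zero_edge, X.symTgt_edge, X.symSrc_edge,
    map_sub, Function.iterate_zero_apply, sandwich_vertexElt, sandwich_vertexElt]
  simp [dd_self_left, dd_self_right, Dir.dd_tail_head, Dir.dd_head_tail, dd_comm (i := l)]

theorem differential_edgeElt :
    differential n k (m + 1) (edgeElt k (m + 1) X t j l α β) =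
      edgeElt k m X t j l α (β + (Dir.op^[m] X).backtrack l t) +
        (-1 : ℤ) ^ m • (edgeElt k m X.op t j l (α + X.backtrack j t) β -
          dotElt k m X t j l α β) := by
  rw [edgeElt, differential, tensorLift_tensor, dGen_edge]
  simp [edgeElt, dotElt, sandwich_tensor, Dir.symTgt_edge, Dir.symSrc_edge, Dir.symTgt_dotted,
    Dir.symSrc_dotted, Dir.op_iterate_op, dd_self_left, dd_self_right, Dir.dd_tail_head,
    dd_comm (i := l)]

theorem differential_dotElt :
    differential n k (m + 1) (dotElt k (m + 1) X t j l α β) =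
      dotElt k m X t j l α (β + (Dir.op^[m] X).op.backtrack l t) +
        (-1 : ℤ) ^ m • (edgeElt k m X t j l (α + 1) β - edgeElt k m X t j l α (β + 1) -
          dotElt k m X.op t j l (α + X.backtrack j t) β) := by
  rw [dotElt, differential, tensorLift_tensor, dGen_dotted]
  simp [edgeElt, dotElt, sandwich_tensor, Dir.symTgt_edge, Dir.symSrc_edge, Dir.symTgt_dotted,
    Dir.symSrc_dotted, Dir.op_iterate_op, dd_self_left, dd_self_right, Dir.dd_tail_head,
    Dir.dd_head_tail, dd_comm (i := l), add_comm 1]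

end

theorem augmentation_comp_differential : augmentation n k ∘ₗ differential n k 0 = 0 := by
  refine hom_ext_one (fun X t j l α β ↦ ?_) fun v j l α β ↦ ?_
  · have := X.backtrack_op_add_dd_head j l t
    rw [LinearMap.comp_apply, differential_zero_edgeElt, map_sub, augmentation_vertexElt,
      augmentation_vertexElt, LinearMap.zero_apply, sub_eq_zero]
    congr 3
    omega
  · rw [LinearMap.comp_apply, differential_loopElt, map_sub, augmentation_vertexElt,
      augmentation_vertexElt, LinearMap.zero_apply, sub_eq_zero]
    congr 3
    omega

theorem differential_comp_differential (m : ℕ) :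
    differential n k m ∘ₗ differential n k (m + 1) = 0 := by
  refine hom_ext_add_two (fun X t j l α β ↦ ?_) fun X t j l α β ↦ ?_
  · rw [LinearMap.comp_apply, differential_edgeElt, map_add, map_zsmul, map_sub]
    obtain _ | m := m
    · rw [differential_zero_edgeElt, differential_zero_edgeElt, dotElt_zero, differential_loopElt]
      simp only [add_assoc, Dir.backtrack_add_op, Dir.op_op, Function.iterate_zero, id, pow_zero,
        one_smul, LinearMap.zero_apply]
      abel
    · rw [differential_edgeElt, differential_edgeElt, differential_dotElt]
      simp only [Dir.op_iterate_op, Dir.op_op, add_assoc, Dir.backtrack_add_op,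
        Dir.backtrack_op_add, Function.iterate_succ_apply', pow_succ, LinearMap.zero_apply]
      obtain h | h := neg_one_pow_eq_or ℤ m <;> simp only [h] <;> abel
  · rw [LinearMap.comp_apply, differential_dotElt, map_add, map_zsmul, map_sub, map_sub]
    obtain _ | m := m
    · rw [differential_zero_edgeElt, differential_zero_edgeElt, dotElt_zero, dotElt_zero,
        differential_loopElt, differential_loopElt]
      simp only [add_assoc, Function.iterate_zero, id, pow_zero, one_smul, LinearMap.zero_apply,
        add_comm 1]
      abel
    · rw [differential_edgeElt, differential_edgeElt, differential_dotElt, differential_dotElt]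
      simp only [Dir.op_iterate_op, Dir.op_op, add_assoc, Dir.backtrack_add_op, add_comm 1,
        Function.iterate_succ_apply', pow_succ, LinearMap.zero_apply]
      obtain h | h := neg_one_pow_eq_or ℤ m <;> simp only [h] <;> abel

end Differential

section Homotopy

variable {n : ℕ} {k : Type*} [Field k]

variable (k) in
/-- Up to sign, `edgePrimitive k (m + 1) X t j l α β` is the image of `edgeElt k m X t j l α β`
under the contracting homotopy: the quotient of `x ^ α * y ^ β - y ^ (α + β)` by `x - y` on the
dotted symbol, corrected by a multiple of the opposite edge symbol that accounts for the remainder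
`y ^ (α + β)`. -/
noncomputable def edgePrimitive (m : ℕ) (X : Dir) (t : Fin n) (j l : Vtx n) (α β : ℕ) :
    P n k (m + 1) :=
  divDiff (dotElt k m X t j l) α β + X.backtrack j t • edgeElt k m X.op t j l 0 (α + β)

theorem edgePrimitive_succ_sub_succ (m : ℕ) (X : Dir) (t : Fin n) (j l : Vtx n) (α β : ℕ) :
    edgePrimitive k m X t j l (α + 1) β - edgePrimitive k m X t j l α (β + 1) =
      dotElt k m X t j l α β := by
  rw [edgePrimitive, edgePrimitive, divDiff_succ_left, add_assoc α 1, add_comm 1]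
  abel

theorem differential_divDiff_dotElt (m : ℕ) (X : Dir) (t : Fin n) (j l : Vtx n) (α β : ℕ) :
    differential n k (m + 1) (divDiff (dotElt k (m + 1) X t j l) α β) =
      divDiff (dotElt k m X t j l) α (β + (Dir.op^[m] X).op.backtrack l t) +
        (-1 : ℤ) ^ m • (edgeElt k m X t j l α β - edgeElt k m X t j l 0 (α + β) -
          divDiff (fun a b ↦ dotElt k m X.op t j l (a + X.backtrack j t) b) α β) := by
  rw [map_divDiff, ← divDiff_telescope, ← divDiff_sub, ← divDiff_smul, ← divDiff_shift_right,
    ← divDiff_add]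
  exact congr_arg (divDiff · α β) (funext₂ fun a b ↦ differential_dotElt ..)

theorem differential_edgePrimitive (m : ℕ) (X : Dir) (t : Fin n) (j l : Vtx n) (α β : ℕ) :
    differential n k (m + 1) (edgePrimitive k (m + 1) X t j l α β) =
      (-1 : ℤ) ^ m • (edgeElt k m X t j l α β -
          edgePrimitive k m X.op t j l (α + X.backtrack j t) β) +
        edgePrimitive k m X t j l α (β + (Dir.op^[m] X).op.backtrack l t) := by
  rw [edgePrimitive, map_add, map_nsmul, differential_edgeElt, differential_divDiff_dotElt,
    edgePrimitive, edgePrimitive]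
  obtain ⟨h, h'⟩ | ⟨h, h'⟩ := X.backtrack_eq_zero_or j t
  · simp only [h, h', add_zero, zero_smul, one_smul, Dir.op_op]
    obtain hm | hm := neg_one_pow_eq_or ℤ m <;> simp only [hm] <;> abel
  · simp only [h, h', add_zero, zero_smul, one_smul, Dir.op_op, divDiff_shift_left,
      Dir.op_iterate_op, add_assoc]
    obtain hm | hm := neg_one_pow_eq_or ℤ m <;> simp only [hm] <;> abel

theorem vertex_induction (j : Vtx n) {motive : Vtx n → Prop} (target : motive j)
    (step : ∀ (X : Dir) (t : Fin n), X.backtrack j t = 0 → motive (X.head t) →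
      motive (X.op.head t)) (v : Vtx n) : motive v := by
  obtain hv | hv := le_total j v
  · induction v using Fin.induction with
    | zero => rwa [← Fin.le_zero_iff.1 hv]
    | succ t ih =>
      obtain rfl | hlt := hv.eq_or_lt
      · exact target
      · have h := Fin.le_castSucc_iff.2 hlt
        exact step .down t (if_pos h) (ih h)
  · induction v using Fin.reverseInduction with
    | last => rwa [← Fin.last_le_iff.1 hv]
    | cast t ih =>
      obtain rfl | hlt := hv.eq_or_lt
      · exact target
      · exact step .up t (if_neg (not_le.2 hlt)) (ih <| Fin.castSucc_lt_iff_succ_le.1 hlt)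

variable (k) in
/-- The chain of arrows of `P_1` along the straight walk from `v` to `j`, with outer ends `j` and
`l` and `N` dots on the right of the first arrow. The later arrows get as many dots on the right as
make the consecutive terms of its boundary cancel. -/
noncomputable def path (v j l : Vtx n) (N : ℕ) : P n k (0 + 1) :=
  if hv : v < j then
    let t := v.castPred (Fin.ne_last_of_lt hv)
    edgeElt k 0 .up t j l 0 N + path t.succ j l (N + Dir.down.backtrack l t)
  else if hv : j < v then
    let t := v.pred (Fin.ne_zero_of_lt hv)
    edgeElt k 0 .down t j l 0 N + path t.castSucc j l (N + Dir.up.backtrack l t)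
  else 0
termination_by (v - j : ℕ) + (j - v : ℕ)
decreasing_by
  all_goals
    have := Fin.lt_def.1 hv
    simp only [Fin.val_succ, Fin.coe_castPred, Fin.val_castSucc, Fin.val_pred]
    omega

theorem path_self (j l : Vtx n) (N : ℕ) : path k j j l N = 0 := by
  rw [path, dif_neg (lt_irrefl j), dif_neg (lt_irrefl j)]

theorem path_tail {X : Dir} {j : Vtx n} {t : Fin n} (h : X.backtrack j t = 0) (l : Vtx n) (N : ℕ) :
    path k (X.op.head t) j l N =
      edgeElt k 0 X t j l 0 N + path k (X.head t) j l (N + X.op.backtrack l t) := by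
  cases X
  · have hlt : t.castSucc < j := by simpa [Dir.backtrack, Fin.lt_def] using h
    change path k t.castSucc j l N = _
    rw [path, dif_pos hlt]
    rfl
  · have hlt : j < t.succ := by simpa [Dir.backtrack, Fin.lt_def, Nat.lt_succ_iff] using h
    change path k t.succ j l N = _
    rw [path, dif_neg hlt.not_gt, dif_pos hlt]
    rfl

/-- The walks to `j` from the two ends of an edge differ by that edge, whichever end is nearer. -/
theorem path_tail_add_edgeElt (X : Dir) (t : Fin n) (j l : Vtx n) (N : ℕ) :
    path k (X.op.head t) j l (N + X.backtrack j t) +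
        X.backtrack j t • edgeElt k 0 X.op t j l 0 (N + X.op.backtrack l t) =
      path k (X.head t) j l (N + X.op.backtrack l t) +
        X.op.backtrack j t • edgeElt k 0 X t j l 0 (N + X.backtrack j t) := by
  obtain ⟨h, h'⟩ | ⟨h, h'⟩ := X.backtrack_eq_zero_or j t
  · simp only [path_tail h, h, h', add_zero, zero_smul, one_smul]
    abel
  · have hpath := path_tail (k := k) h' l (N + X.op.backtrack l t)
    rw [Dir.op_op, add_assoc, X.backtrack_op_add] at hpath
    simp only [hpath, h, h', zero_smul, one_smul, add_zero]
    abel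

theorem differential_path (v j l : Vtx n) (N : ℕ) :
    differential n k 0 (path k v j l N) =
      vertexElt k j j l 0 (N + dd n l v j) - vertexElt k v j l 0 N := by
  induction v using vertex_induction j generalizing N with
  | target => rw [path_self, map_zero, dd_self_right, add_zero, sub_self]
  | step X t h ih =>
    have hdd := X.backtrack_op_add_dd_head j l t
    rw [h, zero_add] at hdd
    rw [path_tail h, map_add, differential_zero_edgeElt, ih, h, add_assoc, hdd]
    abel

/-- The values on basis elements of the contracting homotopy in positive degrees, which vanishes on
loops and dotted symbols. -/
noncomputable def homotopyGen :
    (m : ℕ) → Sym n (m + 1) → Vtx n → Vtx n → ℕ → ℕ → P n k (m + 1 + 1)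
  | 0, .p t => edgePrimitive k 1 .up t
  | 0, .q t => edgePrimitive k 1 .down t
  | 0, .s _ => 0
  | m + 1, .P t => (-1 : ℤ) ^ (m + 1) • edgePrimitive k (m + 2) .up t
  | m + 1, .Q t => (-1 : ℤ) ^ (m + 1) • edgePrimitive k (m + 2) .down t
  | _ + 1, .sP _ => 0
  | _ + 1, .sQ _ => 0

variable (n k) in
/-- The contracting homotopy in positive degrees. -/
noncomputable def homotopy (m : ℕ) : P n k (m + 1) →ₗ[k] P n k (m + 1 + 1) :=
  tensorLift (homotopyGen m)

variable (n k) in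
/-- The contracting homotopy in degree `0`: the dots on the left are moved to the right through the
loops at `v`, and then `v` is moved to `j` along `path`. -/
noncomputable def homotopyZero : P n k 0 →ₗ[k] P n k (0 + 1) :=
  tensorLift fun v j l α β ↦ -(divDiff (loopElt k v j l) α β + path k v j l (α + β))

variable (n k) in
/-- The section `a_{j,l}s^α ↦ e_j ⊗ e_j ⊗ a_{j,l}s^α` of the augmentation. -/
noncomputable def augmentationSection : A n k →ₗ[k] P n k 0 :=
  Finsupp.linearCombination k fun b ↦ vertexElt k b.1 b.1 b.2.1 0 b.2.2

section

variable (m : ℕ) (X : Dir) (t : Fin n) (v j l : Vtx n) (α β : ℕ)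

theorem homotopy_edgeElt :
    homotopy n k m (edgeElt k m X t j l α β) =
      (-1 : ℤ) ^ m • edgePrimitive k (m + 1) X t j l α β := by
  rw [homotopy, edgeElt, tensorLift_tensor]
  obtain _ | m := m <;> cases X <;> first | rfl | exact (one_smul ..).symm

theorem homotopy_dotElt : homotopy n k m (dotElt k m X t j l α β) = 0 := by
  rw [homotopy, dotElt, tensorLift_tensor]
  obtain _ | m := m <;> cases X <;> rfl

theorem homotopy_loopElt : homotopy n k 0 (loopElt k v j l α β) = 0 := by
  rw [homotopy, loopElt, tensorLift_tensor]
  rfl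

theorem homotopyZero_vertexElt :
    homotopyZero n k (vertexElt k v j l α β) =
      -(divDiff (loopElt k v j l) α β + path k v j l (α + β)) :=
  tensorLift_tensor ..

theorem augmentationSection_single :
    augmentationSection n k (.single (j, l, α) 1) = vertexElt k j j l 0 α := by
  rw [augmentationSection, Finsupp.linearCombination_single, one_smul]

theorem differential_divDiff_loopElt :
    differential n k 0 (divDiff (loopElt k v j l) α β) =
      vertexElt k v j l 0 (α + β) - vertexElt k v j l α β := by
  rw [← neg_inj, neg_sub, ← divDiff_telescope, ← LinearMap.neg_apply, map_divDiff]
  refine congr_arg (divDiff · α β) (funext₂ fun a b ↦ ?_)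
  rw [LinearMap.neg_apply, differential_loopElt, neg_sub]

end

theorem augmentation_comp_augmentationSection :
    augmentation n k ∘ₗ augmentationSection n k = LinearMap.id := by
  refine Finsupp.lhom_ext' fun ⟨j, l, α⟩ ↦ LinearMap.ext_ring ?_
  rw [LinearMap.comp_apply, LinearMap.comp_apply, Finsupp.lsingle_apply,
    augmentationSection_single, augmentation_vertexElt, dd_self_right]
  simp

theorem differential_comp_homotopyZero :
    differential n k 0 ∘ₗ homotopyZero n k + augmentationSection n k ∘ₗ augmentation n k =
      LinearMap.id := by
  refine hom_ext_zero fun v j l α β ↦ ?_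
  rw [LinearMap.add_apply, LinearMap.comp_apply, LinearMap.comp_apply, homotopyZero_vertexElt,
    augmentation_vertexElt, augmentationSection_single, map_neg, map_add,
    differential_divDiff_loopElt, differential_path, LinearMap.id_apply]
  abel

theorem differential_comp_homotopy_zero :
    differential n k (0 + 1) ∘ₗ homotopy n k 0 + homotopyZero n k ∘ₗ differential n k 0 =
      LinearMap.id := by
  refine hom_ext_one (fun X t j l α β ↦ ?_) fun v j l α β ↦ ?_
  · have hpath := path_tail_add_edgeElt (k := k) X t j l (α + β)
    rw [← sub_eq_zero] at hpath ⊢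
    rw [LinearMap.add_apply, LinearMap.comp_apply, LinearMap.comp_apply, homotopy_edgeElt,
      differential_zero_edgeElt, pow_zero, one_smul, differential_edgePrimitive, map_sub,
      homotopyZero_vertexElt, homotopyZero_vertexElt, LinearMap.id_apply, edgePrimitive,
      edgePrimitive, dotElt_zero, dotElt_zero, pow_zero, one_smul, Dir.op_op, ← hpath,
      Function.iterate_zero, id]
    simp only [add_right_comm α, add_assoc]
    abel
  · rw [LinearMap.add_apply, LinearMap.comp_apply, LinearMap.comp_apply, homotopy_loopElt,
      map_zero, differential_loopElt, map_sub, homotopyZero_vertexElt, homotopyZero_vertexElt,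
      divDiff_succ_left, LinearMap.id_apply, add_right_comm α, add_assoc α]
    abel

theorem differential_comp_homotopy_succ (m : ℕ) :
    differential n k (m + 1 + 1) ∘ₗ homotopy n k (m + 1) +
      homotopy n k m ∘ₗ differential n k (m + 1) = LinearMap.id := by
  refine hom_ext_add_two (fun X t j l α β ↦ ?_) fun X t j l α β ↦ ?_
  · rw [LinearMap.add_apply, LinearMap.comp_apply, LinearMap.comp_apply, homotopy_edgeElt,
      map_zsmul, differential_edgePrimitive, differential_edgeElt, map_add, map_zsmul, map_sub,
      homotopy_edgeElt, homotopy_edgeElt, homotopy_dotElt, LinearMap.id_apply,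
      Function.iterate_succ_apply', Dir.op_op, pow_succ]
    obtain h | h := neg_one_pow_eq_or ℤ m <;> simp only [h] <;> abel
  · rw [LinearMap.add_apply, LinearMap.comp_apply, LinearMap.comp_apply, homotopy_dotElt,
      differential_dotElt, map_zero, map_add, map_zsmul, map_sub, map_sub, homotopy_edgeElt,
      homotopy_edgeElt, homotopy_dotElt, homotopy_dotElt, LinearMap.id_apply,
      ← edgePrimitive_succ_sub_succ (m + 1)]
    obtain h | h := neg_one_pow_eq_or ℤ m <;> simp only [h] <;> abel

theorem exact_differential_augmentation :
    Function.Exact (differential n k 0) (augmentation n k) :=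
  exact_of_homotopy _ _ augmentation_comp_differential differential_comp_homotopyZero

theorem exact_differential (m : ℕ) :
    Function.Exact (differential n k (m + 1)) (differential n k m) := by
  obtain _ | m := m
  · exact exact_of_homotopy _ _ (differential_comp_differential 0) differential_comp_homotopy_zero
  · exact exact_of_homotopy _ _ (differential_comp_differential _)
      (differential_comp_homotopy_succ m)

end Homotopy

end CS

/-- The augmented Chouhy–Solotar complex `⋯ → P_2 → P_1 → P_0 → A → 0` is exact:
`∂_0` is surjective, `ker ∂_0 = range ∂_1`, and `ker ∂_m = range ∂_{m+1}` for every
`m ≥ 1`; i.e. `(P_•, ∂_•)` is a resolution of the diagonal bimodule of the KLRW algebra.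
(Here `CS.bnd n k m` is the differential `∂_{m+1} : P_{m+1} → P_m` and `CS.bnd0 n k`
is `∂_0 : P_0 → A`.) -/
theorem chouhy_solotar_resolution_exact (n : ℕ) (hn : 1 ≤ n) (k : Type*) [Field k] :
    Function.Surjective (CS.bnd0 n k) ∧
    (∀ v : CS.P n k 0, CS.bnd0 n k v = 0 ↔ ∃ u : CS.P n k 1, CS.bnd n k 0 u = v) ∧
    (∀ (m : ℕ) (v : CS.P n k (m + 1)),
      CS.bnd n k m v = 0 ↔ ∃ u : CS.P n k (m + 2), CS.bnd n k (m + 1) u = v) := by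
  rw [← CS.coe_augmentation]
  simp only [← CS.coe_differential]
  exact ⟨fun a ↦ ⟨_, LinearMap.congr_fun CS.augmentation_comp_augmentationSection a⟩,
    CS.exact_differential_augmentation, CS.exact_differential⟩
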